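/- Let G be a near double broom with n vertices, diameter d, and spine v_0, v_1, …, v_d, where deg(v_1) ≥ deg(v_{d−1}), and whose one extra leaf x is adjacent to v_i for some 2 ≤ i ≤ d−2. Let G* be the double broom obtained by the leaf transplant τ(G,P;(i,d−1)), i.e., by moving x from v_i to v_{d−1}. Then T_mix(G*) > T_mix(G). -/

import Mathlib

/-!
Let `m` be the number of edges of a tree, `D` its metric, `S z = ∑ deg u · D(u, z)` and
`W = ∑ deg z · S z`. A function that vanishes at `z` and satisfies the first-step equations
elsewhere is the hitting time of `z` (`hit_eq_of_poisson`), and comparing Laplacians gives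

* `H(w, z) = m · D(w, z) + (S z - S w) / 2` (`IsTreeMetric.hit_eq`),
* `H(w, z) - H(π, z) = m · D(w, z) - (S w + S z) / 2 + W / (4 m)`
  (`IsTreeMetric.hit_sub_hitPi`).

The mixing time is the maximum of the last expression over all `w` and `z`. Now
`S w + S z - 2 m · D(w, z) = ∑ deg u · (D(u, z) + D(u, w) - D(w, z))` is twice the degree-weighted
sum of the distances to the path from `w` to `z`. In a caterpillar it is smallest when that path is
a spine, and then it only depends on the number `L` of leaves, so that
`T_mix = 2 - L + W / (4 m)` (`IsCat.Tmix_eq`). Since `W` is four times the sum of all distances plus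
a term depending on `m` only (`IsTreeMetric.gutman_eq`), and a leaf transplant fixes `m` and `L`, it
remains to see that the sum of all distances increases (`IsCat.Tmix_lt`).

Only distances from the moved leaf `x` change. Its distances to the inner spine vertices increase
in total (`sum_displacement_pos`). All other leaves are attached to `v_1` or `v_{d-1}`: those at
`v_1` are at least as many, by the degree hypothesis, and recede from `x` by as much as those at
`v_{d-1}` get closer. That there are no leaves elsewhere follows from the removal of `x` leaving a
double broom, in which the neighbor of a leaf has at most one neighbor of degree at least two
(`LeafRule`). A leaf at an inner spine vertex `v_p` would have the two neighbors `v_{p-1}` and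
`v_{p+1}` of `v_p` violate this.
-/

open scoped Classical

namespace RWMix

/-- The degree of a vertex. -/
noncomputable def deg {W : Type*} (G : SimpleGraph W) (v : W) : ℕ :=
  Nat.card {w // G.Adj v w}

/-- The number of edges of a graph. -/
noncomputable def numEdges {W : Type*} (G : SimpleGraph W) : ℕ :=
  Nat.card G.edgeSet

/-- Transition matrix of the simple random walk: from `u` move to each neighbor
with probability `1/deg u`. -/
noncomputable def step {V : Type*} [Fintype V] (G : SimpleGraph V) : Matrix V V ℝ :=
  Matrix.of fun u w => if G.Adj u w then ((deg G u : ℝ))⁻¹ else 0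

/-- The walk killed at `v` (rows at `v` are zeroed out). -/
noncomputable def killed {V : Type*} [Fintype V] (G : SimpleGraph V) (v : V) :
    Matrix V V ℝ :=
  Matrix.of fun u w => if u = v then 0 else step G u w

/-- Expected hitting time `H(u,v)`: the sum over `t ≥ 0` of the probability that the walk
started at `u` has not visited `v` through time `t`.  This equals the expectation of the
first hitting time of `v`, and `hit G u u = 0`. -/
noncomputable def hit {V : Type*} [Fintype V] [DecidableEq V]
    (G : SimpleGraph V) (u v : V) : ℝ :=
  ∑' t : ℕ, ∑ w : V, (killed G v ^ t) u w * (if w = v then (0 : ℝ) else 1)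

/-- The stationary distribution: `π v = deg v / (2 |E|)`. -/
noncomputable def statPr {V : Type*} [Fintype V] (G : SimpleGraph V) (v : V) : ℝ :=
  (deg G v : ℝ) / (2 * (numEdges G : ℝ))

/-- The access time `H(π, v) = ∑_u π_u H(u,v)`. -/
noncomputable def hitPi {V : Type*} [Fintype V] [DecidableEq V]
    (G : SimpleGraph V) (v : V) : ℝ :=
  ∑ u : V, statPr G u * hit G u v

/-- The mixing time from vertex `v`: `H(v,π) = max_w H(w,v) − H(π,v)`. -/
noncomputable def mixFrom {V : Type*} [Fintype V] [DecidableEq V]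
    (G : SimpleGraph V) (v : V) : ℝ :=
  (⨆ w : V, hit G w v) - hitPi G v

/-- The (exact) mixing time `T_mix(G) = max_v H(v,π)`. -/
noncomputable def Tmix {V : Type*} [Fintype V] [DecidableEq V]
    (G : SimpleGraph V) : ℝ :=
  ⨆ v : V, mixFrom G v

/-- Edges of the double broom, on vertex set `Fin (d+1) ⊕ Fin a ⊕ Fin b`:
the spine path `v_0, …, v_d`, extra left leaves attached to `v_1`,
and extra right leaves attached to `v_{d-1}`. -/
def broomRel (d : ℕ) {a b : ℕ} :
    (Fin (d+1) ⊕ Fin a ⊕ Fin b) → (Fin (d+1) ⊕ Fin a ⊕ Fin b) → Prop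
  | Sum.inl i, Sum.inl j => (i : ℕ) + 1 = (j : ℕ)
  | Sum.inr (Sum.inl _), Sum.inl j => (j : ℕ) = 1
  | Sum.inr (Sum.inr _), Sum.inl j => (j : ℕ) = d - 1
  | _, _ => False

/-- The double broom of diameter `d` with `ℓ` left leaves and `r` right leaves:
the diametral path is `v_0, …, v_d` (where `v_0` is one left leaf and `v_d` one right
leaf), together with `ℓ - 1` further pendant leaves at `v_1` and `r - 1` further pendant
leaves at `v_{d-1}`.  It has `d - 1 + ℓ + r` vertices. -/
def doubleBroom (d ℓ r : ℕ) :
    SimpleGraph (Fin (d+1) ⊕ Fin (ℓ-1) ⊕ Fin (r-1)) :=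
  SimpleGraph.fromRel (broomRel d)

/-- The balanced double broom `D_{n,d}`, with `ℓ = ⌈(n-d+1)/2⌉` and `r = ⌊(n-d+1)/2⌋`. -/
def balancedDB (n d : ℕ) :=
  doubleBroom d ((n - d + 2) / 2) ((n - d + 1) / 2)

/-- A leaf is a vertex of degree one. -/
def IsLeaf {W : Type*} (G : SimpleGraph W) (v : W) : Prop := deg G v = 1

/-- `v 0, v 1, …, v s` is a leaf-to-leaf path in `G`. -/
def IsLeafPath {W : Type*} (G : SimpleGraph W) (s : ℕ) (v : Fin (s+1) → W) : Prop :=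
  Function.Injective v ∧
  (∀ i : ℕ, ∀ h : i < s, G.Adj (v ⟨i, by omega⟩) (v ⟨i + 1, by omega⟩)) ∧
  IsLeaf G (v 0) ∧ IsLeaf G (v (Fin.last s))

/-- A caterpillar: every vertex is within distance one of a fixed leaf-to-leaf path
(the spine). -/
def IsCaterpillar {W : Type*} (G : SimpleGraph W) : Prop :=
  ∃ (s : ℕ) (v : Fin (s+1) → W), IsLeafPath G s v ∧ ∀ w, ∃ i, G.dist w (v i) ≤ 1

/-- Move the leaf `y` from its neighbor `a` to the new neighbor `b`:
delete the edge `{a,y}` and add the edge `{b,y}`. -/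
def moveLeaf {W : Type*} (G : SimpleGraph W) (a y b : W) : SimpleGraph W :=
  SimpleGraph.fromEdgeSet ((G.edgeSet \ {s(a, y)}) ∪ {s(b, y)})

/-- A graph is a double broom if it is isomorphic to some `doubleBroom d ℓ r`
with `ℓ, r ≥ 1`. -/
def IsDoubleBroom {W : Type*} (G : SimpleGraph W) : Prop :=
  ∃ (d ℓ r : ℕ), 1 ≤ ℓ ∧ 1 ≤ r ∧ Nonempty (G ≃g doubleBroom d ℓ r)

/-- A near double broom: not a double broom, but there is exactly one leaf whose
removal results in a double broom. -/
def IsNearDoubleBroom {W : Type*} (G : SimpleGraph W) : Prop :=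
  ¬ IsDoubleBroom G ∧
    ∃! x : W, IsLeaf G x ∧ IsDoubleBroom (G.induce {y | y ≠ x})

/-- `w` belongs to the set `V_k`: either `w = v k`, or `w` is a vertex off the spine
adjacent to `v k`. -/
def inVk {W : Type*} {d : ℕ} (G : SimpleGraph W) (v : Fin (d+1) → W)
    (k : Fin (d+1)) (w : W) : Prop :=
  w = v k ∨ ((∀ m, w ≠ v m) ∧ G.Adj (v k) w)

/-! ### Hitting times as solutions of a Poisson equation -/

/-- A nonnegative function vanishing at `z` and solving the first-step equations elsewhere is the
hitting time of `z`. -/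
theorem hit_eq_of_poisson {V : Type*} [Fintype V] [DecidableEq V] (G : SimpleGraph V) (z : V)
    (h : V → ℝ) (hz : h z = 0) (h0 : ∀ w, 0 ≤ h w)
    (hh : ∀ w, w ≠ z → h w = 1 + ∑ y, step G w y * h y) (u : V) : hit G u z = h u := by
  set K := killed G z with hK
  set e : V → ℝ := fun w => if w = z then 0 else 1 with he
  have hKnn : ∀ a b, 0 ≤ K a b := by
    intro a b
    simp only [hK, killed, step, Matrix.of_apply]
    split_ifs <;> positivity
  have hpow : ∀ t a b, 0 ≤ (K ^ t) a b := by
    intro t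
    induction t with
    | zero =>
      intro a b
      rw [pow_zero, Matrix.one_apply]
      split_ifs <;> norm_num
    | succ t ih =>
      intro a b
      rw [pow_succ, Matrix.mul_apply]
      exact Finset.sum_nonneg fun c _ => mul_nonneg (ih a c) (hKnn c b)
  have hpoisson : h = e + K.mulVec h := by
    funext w
    by_cases hw : w = z
    · subst hw
      simp [he, hK, killed, Matrix.mulVec, dotProduct, hz]
    · simp only [Pi.add_apply, he, hw, if_false, hK, Matrix.mulVec, dotProduct, killed,
        Matrix.of_apply]
      exact hh w hw
  have hiter : ∀ T : ℕ, (∑ t ∈ Finset.range T, ((K ^ t).mulVec e) u) + ((K ^ T).mulVec h) u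
      = h u := by
    intro T
    induction T with
    | zero => simp
    | succ T ih =>
      rw [Finset.sum_range_succ, ← ih]
      conv_rhs => rw [hpoisson, Matrix.mulVec_add, Matrix.mulVec_mulVec, ← pow_succ]
      simp only [Pi.add_apply]
      ring
  have hann : ∀ t, 0 ≤ ((K ^ t).mulVec e) u := by
    intro t
    refine Finset.sum_nonneg fun c _ => mul_nonneg (hpow t u c) ?_
    simp only [he]
    split_ifs <;> norm_num
  have hrem : ∀ t, 0 ≤ ((K ^ t).mulVec h) u := fun t =>
    Finset.sum_nonneg fun c _ => mul_nonneg (hpow t u c) (h0 c)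
  have hsum : Summable fun t => ((K ^ t).mulVec e) u :=
    summable_of_sum_range_le (c := h u) hann fun T => by linarith [hiter T, hrem T]
  have hto : Filter.Tendsto (fun t => ((K ^ t).mulVec h) u) Filter.atTop (nhds 0) := by
    have h1 : Filter.Tendsto (fun t => (∑ w, h w) * ((K ^ t).mulVec e) u) Filter.atTop
        (nhds 0) := by
      simpa using hsum.tendsto_atTop_zero.const_mul (∑ w, h w)
    refine squeeze_zero hrem (fun t => ?_) h1
    simp only [Matrix.mulVec, dotProduct]
    rw [Finset.mul_sum]
    refine Finset.sum_le_sum fun c _ => ?_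
    have hc : h c ≤ (∑ w, h w) * e c := by
      by_cases hc : c = z
      · simp [hc, he, hz]
      · simpa [he, hc] using
          Finset.single_le_sum (f := h) (fun w _ => h0 w) (Finset.mem_univ c)
    nlinarith [hpow t u c, mul_le_mul_of_nonneg_left hc (hpow t u c)]
  have hS : HasSum (fun t => ((K ^ t).mulVec e) u) (h u) := by
    rw [hasSum_iff_tendsto_nat_of_nonneg hann]
    have : (fun T => ∑ t ∈ Finset.range T, ((K ^ t).mulVec e) u)
        = fun T => h u - ((K ^ T).mulVec h) u := by
      funext T
      linarith [hiter T]
    rw [this]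
    simpa using hto.const_sub (h u)
  have := hS.tsum_eq
  rw [← this]
  rfl

/-! ### The walk on a tree, via its metric -/

/-- `D` behaves as the graph metric of a tree: from `w ≠ z` exactly one neighbor of `w` is
closer to `z`, and every other neighbor is farther away. -/
structure IsTreeMetric {V : Type*} (G : SimpleGraph V) (D : V → V → ℕ) : Prop where
  self : ∀ z, D z z = 0
  symm : ∀ u w, D u w = D w u
  tri : ∀ u w z, D u w ≤ D u z + D z w
  of_adj : ∀ u w, G.Adj u w → D u w = 1
  toward : ∀ w z, w ≠ z → ∃ y₀, G.Adj w y₀ ∧ D y₀ z + 1 = D w z ∧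
    ∀ y, G.Adj w y → y ≠ y₀ → D y z = D w z + 1

theorem deg_eq_card {V : Type*} [Fintype V] (G : SimpleGraph V) (w : V) :
    deg G w = (Finset.univ.filter fun y => G.Adj w y).card := by
  rw [deg, Nat.card_eq_fintype_card, Fintype.card_subtype]

theorem sum_deg {V : Type*} [Fintype V] (G : SimpleGraph V) :
    ∑ w, (deg G w : ℝ) = 2 * (numEdges G : ℝ) := by
  have h := G.sum_degrees_eq_twice_card_edges
  have h1 : ∀ w, deg G w = G.degree w := by
    intro w
    rw [deg, Nat.card_eq_fintype_card, ← SimpleGraph.card_neighborSet_eq_degree]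
    rfl
  have h2 : numEdges G = G.edgeFinset.card := by
    rw [numEdges, Nat.card_eq_fintype_card, SimpleGraph.edgeFinset_card]
  rw [h2]
  simp only [h1]
  exact_mod_cast h

theorem IsTreeMetric.adj_sq {V : Type*} {G : SimpleGraph V} {D : V → V → ℕ}
    (hD : IsTreeMetric G D) {w y : V} (h : G.Adj w y) (z : V) :
    ((D y z : ℝ) - D w z) ^ 2 = 1 := by
  by_cases hw : w = z
  · subst hw
    rw [hD.symm y w, hD.of_adj w y h, hD.self]
    norm_num
  · obtain ⟨y₀, ha, h1, h2⟩ := hD.toward w z hw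
    by_cases hy : y = y₀
    · subst hy
      rw [← h1]
      push_cast
      ring
    · rw [h2 y h hy]
      push_cast
      ring

theorem sum_adj_swap {V : Type*} [Fintype V] (G : SimpleGraph V) (f : V → ℝ) :
    ∑ w, ∑ y with G.Adj w y, f y = ∑ w, deg G w * f w := by
  simp only [Finset.sum_filter]
  rw [Finset.sum_comm]
  refine Finset.sum_congr rfl fun w _ => ?_
  rw [← Finset.sum_filter, Finset.sum_const, nsmul_eq_mul, deg_eq_card]
  simp only [G.adj_comm]

section Tree

variable {V : Type*} [Fintype V] [DecidableEq V] {G : SimpleGraph V} {D : V → V → ℕ}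

/-- Off `z`, all neighbors of `w` but one are farther from `z`; the exception contributes `-1`
rather than `1`. -/
theorem IsTreeMetric.laplacian (hD : IsTreeMetric G D) (w z : V) :
    ∑ y with G.Adj w y, ((D y z : ℝ) - D w z) = deg G w - (if w = z then 0 else 2) := by
  rw [deg_eq_card]
  split_ifs with h
  · subst h
    rw [Finset.sum_congr rfl (g := fun _ => (1 : ℝ))]
    · simp
    · intro y hy
      rw [hD.symm y w, hD.of_adj w y (by simpa using hy), hD.self]
      norm_num
  · obtain ⟨y₀, ha, h1, h2⟩ := hD.toward w z h
    rw [Finset.sum_congr rfl (g := fun y => (1 : ℝ) - if y = y₀ then 2 else 0)]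
    · rw [Finset.sum_sub_distrib, Finset.sum_ite_eq']
      simp [ha]
    · intro y hy
      have hy : G.Adj w y := by simpa using hy
      split_ifs with hy0
      · subst hy0
        rw [← h1]
        push_cast
        ring
      · rw [h2 y hy hy0]
        push_cast
        ring

/-- The Laplacian of `D(·, z)` sums to zero. -/
theorem IsTreeMetric.numEdges_eq (hD : IsTreeMetric G D) (z : V) :
    (numEdges G : ℝ) = Fintype.card V - 1 := by
  have h1 : ∑ w, ∑ y with G.Adj w y, ((D y z : ℝ) - D w z) = 0 := by
    simp only [Finset.sum_sub_distrib, Finset.sum_const, nsmul_eq_mul, ← deg_eq_card]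
    rw [sum_adj_swap G fun y => (D y z : ℝ)]
    simp
  simp only [hD.laplacian] at h1
  rw [Finset.sum_sub_distrib, sum_deg] at h1
  have h2 : ∑ w : V, (if w = z then (0 : ℝ) else 2) = 2 * (Fintype.card V - 1) := by
    have : ∀ w : V, (if w = z then (0 : ℝ) else 2) = 2 - if w = z then 2 else 0 := by
      intro w
      split_ifs <;> norm_num
    simp only [this, Finset.sum_sub_distrib, Finset.sum_ite_eq']
    simp
    ring
  linarith

/-- The degree-weighted sum of the distances to `z`. -/
noncomputable def degDist (G : SimpleGraph V) (D : V → V → ℕ) (z : V) : ℝ :=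
  ∑ u, (deg G u : ℝ) * D u z

/-- The Gutman index `∑ deg u · deg w · D(u,w)`, summed over ordered pairs. -/
noncomputable def gutman (G : SimpleGraph V) (D : V → V → ℕ) : ℝ :=
  ∑ z, (deg G z : ℝ) * degDist G D z

/-- Obtained by summing `D(y,z)² - D(w,z)²` over all ordered edges `(w,y)`. -/
theorem IsTreeMetric.degDist_eq (hD : IsTreeMetric G D) (z : V) :
    degDist G D z = 2 * (∑ w, (D w z : ℝ)) - numEdges G := by
  have h1 : ∑ w, ∑ y with G.Adj w y, ((D y z : ℝ) ^ 2 - (D w z : ℝ) ^ 2) = 0 := by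
    simp only [Finset.sum_sub_distrib, Finset.sum_const, nsmul_eq_mul, ← deg_eq_card]
    rw [sum_adj_swap G fun y => (D y z : ℝ) ^ 2]
    simp
  have h2 : ∀ w, ∑ y with G.Adj w y, ((D y z : ℝ) ^ 2 - (D w z : ℝ) ^ 2)
      = 2 * (deg G w * D w z) - 4 * D w z + deg G w := by
    intro w
    have h3 : ∀ y ∈ Finset.univ.filter (fun y => G.Adj w y),
        (D y z : ℝ) ^ 2 - (D w z : ℝ) ^ 2 = 2 * D w z * ((D y z : ℝ) - D w z) + 1 := by
      intro y hy
      have := hD.adj_sq (by simpa using hy : G.Adj w y) z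
      linear_combination this
    rw [Finset.sum_congr rfl h3, Finset.sum_add_distrib, ← Finset.mul_sum, hD.laplacian,
      Finset.sum_const, ← deg_eq_card]
    split_ifs with h
    · subst h
      rw [hD.self]
      simp
    · simp
      ring
  simp only [h2] at h1
  rw [Finset.sum_add_distrib, Finset.sum_sub_distrib, sum_deg, ← Finset.mul_sum,
    ← Finset.mul_sum] at h1
  rw [degDist]
  linarith

theorem IsTreeMetric.gutman_eq (hD : IsTreeMetric G D) :
    gutman G D = 4 * (∑ z, ∑ w, (D w z : ℝ)) - 2 * numEdges G * Fintype.card V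
      - 2 * (numEdges G : ℝ) ^ 2 := by
  have h1 : gutman G D = 2 * (∑ z, degDist G D z) - 2 * (numEdges G : ℝ) ^ 2 := by
    have h2 : ∑ z, (deg G z : ℝ) * (∑ w, (D w z : ℝ)) = ∑ w, degDist G D w := by
      simp only [degDist, Finset.mul_sum]
      rw [Finset.sum_comm]
      exact Finset.sum_congr rfl fun w _ => Finset.sum_congr rfl fun z _ => by rw [hD.symm w z]
    rw [gutman, ← h2, Finset.mul_sum]
    simp only [hD.degDist_eq, mul_sub, Finset.sum_sub_distrib]
    rw [← Finset.sum_mul, sum_deg]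
    have : ∀ z, (deg G z : ℝ) * (2 * ∑ w, (D w z : ℝ)) = 2 * (deg G z * ∑ w, (D w z : ℝ)) :=
      fun z => by ring
    simp only [this]
    ring
  rw [h1]
  simp only [hD.degDist_eq, Finset.sum_sub_distrib, ← Finset.mul_sum]
  simp
  ring

theorem IsTreeMetric.degDist_laplacian (hD : IsTreeMetric G D) (w : V) :
    ∑ y with G.Adj w y, (degDist G D y - degDist G D w)
      = 2 * numEdges G * deg G w - 4 * numEdges G + 2 * deg G w := by
  simp only [degDist, ← Finset.sum_sub_distrib, ← mul_sub]
  rw [Finset.sum_comm]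
  have h1 : ∀ u, ∑ y with G.Adj w y, (deg G u : ℝ) * ((D u y : ℝ) - D u w)
      = deg G u * (deg G w - 2) + if w = u then 2 * (deg G u : ℝ) else 0 := by
    intro u
    rw [← Finset.mul_sum]
    simp only [hD.symm u]
    rw [hD.laplacian]
    split_ifs <;> ring
  simp only [h1]
  rw [Finset.sum_add_distrib, ← Finset.sum_mul, sum_deg, Finset.sum_ite_eq]
  simp
  ring

/-- Both sides vanish at `z` and have the same Laplacian elsewhere. Nonnegativity of the right-hand
side is the triangle inequality, averaged. -/
theorem IsTreeMetric.hit_eq (hD : IsTreeMetric G D) (w z : V) :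
    hit G w z = numEdges G * D w z + (degDist G D z - degDist G D w) / 2 := by
  refine hit_eq_of_poisson G z
    (fun w => numEdges G * D w z + (degDist G D z - degDist G D w) / 2) ?_ ?_ ?_ w
  · simp [hD.self]
  · intro w
    have : degDist G D w - degDist G D z ≤ 2 * numEdges G * D w z := by
      rw [← sum_deg, degDist, degDist, ← Finset.sum_sub_distrib, Finset.sum_mul]
      refine Finset.sum_le_sum fun u _ => ?_
      rw [← mul_sub]
      refine mul_le_mul_of_nonneg_left ?_ (Nat.cast_nonneg _)
      have h : D u w ≤ D u z + D w z := by
        rw [hD.symm w z]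
        exact hD.tri u w z
      have h' : (D u w : ℝ) ≤ D u z + D w z := by exact_mod_cast h
      linarith
    linarith
  · intro w hw
    obtain ⟨y₀, ha, -, -⟩ := hD.toward w z hw
    have hpos : (deg G w : ℝ) ≠ 0 := by
      rw [deg_eq_card]
      exact_mod_cast (Finset.card_pos.2 ⟨y₀, by simpa using ha⟩).ne'
    have h1 : ∀ f : V → ℝ, ∑ y, step G w y * f y
        = (deg G w : ℝ)⁻¹ * ∑ y with G.Adj w y, f y := by
      intro f
      rw [Finset.mul_sum, Finset.sum_filter]
      refine Finset.sum_congr rfl fun y _ => ?_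
      simp only [step, Matrix.of_apply]
      split_ifs <;> ring
    rw [h1]
    have h2 := hD.laplacian w z
    have h3 := hD.degDist_laplacian w
    rw [if_neg hw] at h2
    simp only [Finset.sum_sub_distrib, Finset.sum_const, nsmul_eq_mul, ← deg_eq_card] at h2 h3
    simp only [Finset.sum_add_distrib, ← Finset.mul_sum, ← Finset.sum_div,
      Finset.sum_sub_distrib, Finset.sum_const, nsmul_eq_mul, ← deg_eq_card]
    field_simp
    linear_combination (-2 * (numEdges G : ℝ)) * h2 + h3

theorem IsTreeMetric.hitPi_eq (hD : IsTreeMetric G D) (hm : (numEdges G : ℝ) ≠ 0) (z : V) :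
    hitPi G z = degDist G D z - gutman G D / (4 * numEdges G) := by
  have h1 : ∀ u, statPr G u * hit G u z = (2 * (numEdges G : ℝ))⁻¹ *
      (numEdges G * (deg G u * D u z) + degDist G D z / 2 * deg G u
        - (1 / 2) * (deg G u * degDist G D u)) := by
    intro u
    rw [hD.hit_eq, statPr]
    ring
  simp only [hitPi, h1]
  rw [← Finset.mul_sum, Finset.sum_sub_distrib, Finset.sum_add_distrib, ← Finset.mul_sum,
    ← Finset.mul_sum, ← Finset.mul_sum, sum_deg, ← gutman, ← degDist]
  field_simp
  ring

/-- The quantity whose maximum over all pairs is the mixing time; it is symmetric in `w` and `z`. -/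
theorem IsTreeMetric.hit_sub_hitPi (hD : IsTreeMetric G D) (hm : (numEdges G : ℝ) ≠ 0) (w z : V) :
    hit G w z - hitPi G z = numEdges G * D w z - (degDist G D z + degDist G D w) / 2
      + gutman G D / (4 * numEdges G) := by
  rw [hD.hit_eq, hD.hitPi_eq hm]
  ring

theorem Tmix_eq_of_max (G : SimpleGraph V) (T : ℝ) (hle : ∀ w z, hit G w z - hitPi G z ≤ T)
    (w₀ z₀ : V) (heq : hit G w₀ z₀ - hitPi G z₀ = T) : Tmix G = T := by
  have : Nonempty V := ⟨w₀⟩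
  apply le_antisymm
  · refine ciSup_le fun z => ?_
    have : (⨆ w, hit G w z) ≤ T + hitPi G z := ciSup_le fun w => by linarith [hle w z]
    rw [mixFrom]
    linarith
  · have h1 : mixFrom G z₀ ≤ Tmix G :=
      le_ciSup (f := fun z => mixFrom G z) (Set.finite_range _).bddAbove z₀
    have h2 : hit G w₀ z₀ ≤ ⨆ w, hit G w z₀ :=
      le_ciSup (f := fun w => hit G w z₀) (Set.finite_range _).bddAbove w₀
    rw [mixFrom] at h1
    linarith

end Tree

/-! ### Caterpillars in coordinates -/

/-- Coordinates for a caterpillar `G` whose non-leaves form a path of `k` vertices: `pos w` is the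
index in `{1,…,k}` of `w`, if `w` is on that path, or else of its neighbor on the path, and
`o w = 1` exactly for the leaves. The two ends of a spine count as leaves here. -/
structure IsCat {V : Type*} (G : SimpleGraph V) (k : ℕ) (pos o : V → ℕ) : Prop where
  o_le : ∀ w, o w ≤ 1
  one_le : ∀ w, 1 ≤ pos w
  pos_le : ∀ w, pos w ≤ k
  core_inj : ∀ u w, o u = 0 → o w = 0 → pos u = pos w → u = w
  core_ex : ∀ p, 1 ≤ p → p ≤ k → ∃ u, o u = 0 ∧ pos u = p
  adj : ∀ u w, G.Adj u w ↔ (o u + o w = 1 ∧ pos u = pos w) ∨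
    (o u = 0 ∧ o w = 0 ∧ (pos u + 1 = pos w ∨ pos w + 1 = pos u))

/-- The graph metric of a caterpillar in coordinates. One of the two truncated differences
vanishes, so their sum is `|pos u - pos w|`. -/
noncomputable def catDist {V : Type*} (pos o : V → ℕ) (u w : V) : ℕ :=
  if u = w then 0 else (pos u - pos w) + (pos w - pos u) + o u + o w

theorem IsCat.isTreeMetric {V : Type*} {G : SimpleGraph V} {k : ℕ} {pos o : V → ℕ}
    (h : IsCat G k pos o) : IsTreeMetric G (catDist pos o) where
  self z := by simp [catDist]
  symm u w := by
    unfold catDist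
    split_ifs <;> first | omega | (exfalso; simp_all)
  tri u w z := by
    unfold catDist
    split_ifs <;> first | omega | (exfalso; simp_all; done) | (subst_vars; omega)
  of_adj u w huw := by
    have h1 := huw.ne
    rw [h.adj] at huw
    rw [catDist, if_neg h1]
    omega
  toward w z hwz := by
    have hw := h.o_le w
    have hz := h.o_le z
    by_cases how : o w = 0
    · rcases lt_trichotomy (pos w) (pos z) with hlt | heq | hgt
      · obtain ⟨y₀, h1, h2⟩ := h.core_ex (pos w + 1) (by omega) (by have := h.pos_le z; omega)
        refine ⟨y₀, (h.adj _ _).2 (by omega), ?_, fun y hy hne => ?_⟩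
        · by_cases hyz : y₀ = z
          · subst hyz
            simp only [catDist, if_true, if_neg hwz]
            omega
          · have : o z = 0 → pos y₀ ≠ pos z := fun h3 h4 => hyz (h.core_inj _ _ h1 h3 h4)
            simp only [catDist, if_neg hyz, if_neg hwz]
            omega
        · have h3 := (h.adj _ _).1 hy
          have hyz : y ≠ z := by
            rintro rfl
            exact hne (h.core_inj _ _ (by omega) h1 (by omega))
          have : o y = 0 → pos y ≠ pos w + 1 :=
            fun h5 h4 => hne (h.core_inj _ _ h5 h1 (by omega))
          simp only [catDist, if_neg hyz, if_neg hwz]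
          omega
      · have hoz : o z = 1 := by
          by_contra hc
          exact hwz (h.core_inj _ _ how (by omega) heq)
        refine ⟨z, (h.adj _ _).2 (by omega), ?_, fun y hy hne => ?_⟩
        · simp only [catDist, if_true, if_neg hwz]
          omega
        · have h3 := (h.adj _ _).1 hy
          simp only [catDist, if_neg hne, if_neg hwz]
          omega
      · obtain ⟨y₀, h1, h2⟩ := h.core_ex (pos w - 1) (by have := h.one_le z; omega)
          (by have := h.pos_le w; omega)
        refine ⟨y₀, (h.adj _ _).2 (by omega), ?_, fun y hy hne => ?_⟩
        · by_cases hyz : y₀ = z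
          · subst hyz
            simp only [catDist, if_true, if_neg hwz]
            omega
          · have : o z = 0 → pos y₀ ≠ pos z := fun h3 h4 => hyz (h.core_inj _ _ h1 h3 h4)
            simp only [catDist, if_neg hyz, if_neg hwz]
            omega
        · have h3 := (h.adj _ _).1 hy
          have hyz : y ≠ z := by
            rintro rfl
            exact hne (h.core_inj _ _ (by omega) h1 (by omega))
          have : o y = 0 → pos y + 1 ≠ pos w :=
            fun h5 h4 => hne (h.core_inj _ _ h5 h1 (by omega))
          simp only [catDist, if_neg hyz, if_neg hwz]
          omega
    · obtain ⟨y₀, h1, h2⟩ := h.core_ex (pos w) (h.one_le w) (h.pos_le w)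
      refine ⟨y₀, (h.adj _ _).2 (by omega), ?_, fun y hy hne => ?_⟩
      · by_cases hyz : y₀ = z
        · subst hyz
          simp only [catDist, if_true, if_neg hwz]
          omega
        · simp only [catDist, if_neg hyz, if_neg hwz]
          omega
      · have h3 := (h.adj _ _).1 hy
        exact absurd (h.core_inj _ _ (by omega) h1 (by omega)) hne

theorem IsCat.deg_leaf {V : Type*} [Fintype V] {G : SimpleGraph V} {k : ℕ} {pos o : V → ℕ}
    (h : IsCat G k pos o) (u : V) : (deg G u : ℝ) * o u = o u := by
  have hu := h.o_le u
  by_cases hou : o u = 0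
  · simp [hou]
  · obtain ⟨y₀, h1, h2⟩ := h.core_ex (pos u) (h.one_le u) (h.pos_le u)
    have : (Finset.univ.filter fun y => G.Adj u y) = {y₀} := by
      ext y
      simp only [Finset.mem_filter, Finset.mem_univ, true_and, Finset.mem_singleton, h.adj]
      constructor
      · intro h3
        exact h.core_inj _ _ (by omega) h1 (by omega)
      · rintro rfl
        omega
    rw [deg_eq_card, this]
    simp

section Cat

variable {V : Type*} [Fintype V] [DecidableEq V] {G : SimpleGraph V} {k : ℕ} {pos o : V → ℕ}

theorem IsCat.numEdges_eq (h : IsCat G k pos o) (z : V) :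
    (numEdges G : ℝ) = Fintype.card V - 1 :=
  h.isTreeMetric.numEdges_eq z

/-- The mixing time of a caterpillar with a leaf at each end, in terms of its number `∑ o` of
leaves and its Gutman index. The maximum is attained at leaves `a`, `b` at the two ends, since the
path between them is at distance `o u` from every other vertex `u`, the least possible. -/
theorem IsCat.Tmix_eq (h : IsCat G k pos o) (hm : (numEdges G : ℝ) ≠ 0) (a b : V) (hab : a ≠ b)
    (ha : o a = 1) (hb : o b = 1) (hpa : pos a = 1) (hpb : pos b = k) :
    Tmix G = 2 - ∑ u, (o u : ℝ) + gutman G (catDist pos o) / (4 * numEdges G) := by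
  have hD := h.isTreeMetric
  -- The excess `D(u,z) + D(u,w) - D(w,z)` is twice the distance from `u` to the path `w … z`.
  have key : ∀ w z, (degDist G (catDist pos o) z + degDist G (catDist pos o) w)
      - 2 * (numEdges G * catDist pos o w z) = ∑ u, (deg G u : ℝ) *
        ((catDist pos o u z : ℝ) + catDist pos o u w - catDist pos o w z) := by
    intro w z
    simp only [mul_sub, mul_add, Finset.sum_sub_distrib, Finset.sum_add_distrib, degDist]
    rw [← Finset.sum_mul, sum_deg]
    ring
  have hsum : ∀ w z, ∑ u, (deg G u : ℝ) *
      ((o u : ℝ) * (2 - (if u = z then 2 else 0) - if u = w then 2 else 0))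
      = 2 * (∑ u, (o u : ℝ)) - 2 * o z - 2 * o w := by
    intro w z
    have : ∀ u, (deg G u : ℝ) *
        ((o u : ℝ) * (2 - (if u = z then 2 else 0) - if u = w then 2 else 0))
        = 2 * (o u : ℝ) - (if u = z then 2 * (o u : ℝ) else 0)
          - if u = w then 2 * (o u : ℝ) else 0 := by
      intro u
      rw [← mul_assoc, h.deg_leaf]
      split_ifs <;> ring
    simp only [this, Finset.sum_sub_distrib, Finset.sum_ite_eq', ← Finset.mul_sum]
    simp
  apply Tmix_eq_of_max G _ _ a b
  · rw [hD.hit_sub_hitPi hm]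
    have h1 := key a b
    rw [Finset.sum_congr rfl (g := fun u => (deg G u : ℝ) *
      ((o u : ℝ) * (2 - (if u = b then 2 else 0) - if u = a then 2 else 0))), hsum, ha, hb] at h1
    · push_cast at h1
      linarith
    · intro u _
      congr 1
      have hu := h.o_le u
      have hu1 := h.one_le u
      have hu2 := h.pos_le u
      by_cases hub : u = b
      · subst hub
        simp [catDist, hab, hab.symm, ha, hb, hpa, hpb]
        ring
      · by_cases hua : u = a
        · subst hua
          simp [catDist, hab, ha, hb, hpa, hpb]
        · simp only [catDist, hub, hua, hab, if_false, ha, hb, hpa, hpb, sub_zero]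
          have : ((pos u - k) + (k - pos u) + o u + 1) + ((pos u - 1) + (1 - pos u) + o u + 1)
            = o u * 2 + ((1 - k) + (k - 1) + 1 + 1) := by omega
          have h3 : (((pos u - k) + (k - pos u) + o u + 1 : ℕ) : ℝ)
            + (((pos u - 1) + (1 - pos u) + o u + 1 : ℕ) : ℝ)
            = o u * 2 + (((1 - k) + (k - 1) + 1 + 1 : ℕ) : ℝ) := by exact_mod_cast this
          linarith
  · intro w z
    rw [hD.hit_sub_hitPi hm]
    have h1 := key w z
    have hw : (o w : ℝ) ≤ 1 := by exact_mod_cast h.o_le w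
    have hz : (o z : ℝ) ≤ 1 := by exact_mod_cast h.o_le z
    have h2 : ∑ u, (deg G u : ℝ) *
        ((o u : ℝ) * (2 - (if u = z then 2 else 0) - if u = w then 2 else 0))
        ≤ ∑ u, (deg G u : ℝ) *
        ((catDist pos o u z : ℝ) + catDist pos o u w - catDist pos o w z) := by
      refine Finset.sum_le_sum fun u _ => mul_le_mul_of_nonneg_left ?_ (Nat.cast_nonneg _)
      have ht := hD.tri w z u
      rw [hD.symm w u] at ht
      have ht' : (catDist pos o w z : ℝ) ≤ catDist pos o u w + catDist pos o u z := by
        exact_mod_cast ht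
      have ho : (0 : ℝ) ≤ o u := Nat.cast_nonneg _
      by_cases huz : u = z
      · rw [if_pos huz]
        split_ifs <;> nlinarith
      · by_cases huw : u = w
        · rw [if_neg huz, if_pos huw]
          nlinarith
        · rw [if_neg huz, if_neg huw]
          have : o u * 2 + catDist pos o w z ≤ catDist pos o u z + catDist pos o u w := by
            simp only [catDist, huz, huw, if_false]
            split_ifs <;> omega
          have h3 : (o u : ℝ) * 2 + catDist pos o w z ≤ catDist pos o u z + catDist pos o u w := by
            exact_mod_cast this
          linarith
    rw [hsum] at h2
    linarith

end Cat

/-! ### Moving the extra leaf increases the Gutman index -/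

/-- The displacement `|k - p| - |i - p|`, summed over the path `1, …, k`, is positive. -/
theorem sum_displacement_pos (i k : ℕ) (hi : 2 ≤ i) (hik : i < k) :
    0 < ∑ p ∈ Finset.Icc 1 k, (((k : ℤ) - p) - |(i : ℤ) - p|) := by
  have h1 : ∀ k : ℕ, 2 * ∑ p ∈ Finset.Icc 1 k, ((k : ℤ) - p) = k * (k - 1) := by
    intro k
    induction k with
    | zero => simp
    | succ k ih =>
      rw [Finset.sum_Icc_succ_top (by omega)]
      have : ∀ p : ℕ, (((k + 1 : ℕ) : ℤ) - p) = ((k : ℤ) - p) + 1 := by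
        intro p
        push_cast
        ring
      simp only [this]
      rw [Finset.sum_add_distrib, mul_add, mul_add, ih]
      simp
      ring
  have h2 : ∀ j : ℕ, 2 * ∑ p ∈ Finset.Icc 1 (i + j), |(i : ℤ) - p|
      = i * (i - 1) + j * (j + 1) := by
    intro j
    induction j with
    | zero =>
      rw [add_zero, ← h1 i, Finset.sum_congr rfl (g := fun p : ℕ => ((i : ℤ) - p))]
      · simp
      · intro p hp
        rw [Finset.mem_Icc] at hp
        exact abs_of_nonneg (by omega)
    | succ j ih =>
      rw [← add_assoc, Finset.sum_Icc_succ_top (by omega), mul_add, ih]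
      have : |(i : ℤ) - ((i + j + 1 : ℕ) : ℤ)| = j + 1 := by
        rw [abs_of_nonpos (by push_cast; omega)]
        push_cast
        ring
      rw [this]
      push_cast
      ring
  obtain ⟨j, rfl⟩ := Nat.exists_eq_add_of_lt hik
  have h3 := h1 (i + j + 1)
  have h4 := h2 (j + 1)
  rw [Finset.sum_sub_distrib]
  rw [← add_assoc] at h4
  push_cast at h3 h4 ⊢
  nlinarith

/-- Moving a leaf `x` to the end `k` keeps the numbers of leaves and of edges, and increases the sum
of all distances: the distances from `x` to the path grow in total, and the leaves at `1`, from
which `x` recedes, are at least as many as the leaves at `k`, which `x` approaches by the same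
amount. -/
theorem IsCat.Tmix_lt {V : Type*} [Fintype V] [DecidableEq V] {G G' : SimpleGraph V} {k : ℕ}
    {pos o : V → ℕ} (h : IsCat G k pos o) (x : V) (hx : o x = 1)
    (hx2 : 2 ≤ pos x) (hxk : pos x < k) (h' : IsCat G' k (Function.update pos x k) o)
    (hends : ∀ w, o w = 1 → w ≠ x → pos w = 1 ∨ pos w = k)
    (hcard : (Finset.univ.filter fun w => o w = 1 ∧ w ≠ x ∧ pos w = k).card
      ≤ (Finset.univ.filter fun w => o w = 1 ∧ w ≠ x ∧ pos w = 1).card)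
    (a b : V) (ha : o a = 1) (hb : o b = 1) (hpa : pos a = 1) (hpb : pos b = k) :
    Tmix G < Tmix G' := by
  have hax : a ≠ x := by
    rintro rfl
    omega
  have hbx : b ≠ x := by
    rintro rfl
    omega
  have hab : a ≠ b := by
    rintro rfl
    omega
  have hm : 0 < (numEdges G : ℝ) := by
    rw [h.numEdges_eq a]
    have : 1 < Fintype.card V := Fintype.one_lt_card_iff.2 ⟨a, b, hab⟩
    have : (1 : ℝ) < Fintype.card V := by exact_mod_cast this
    linarith
  have hmm : (numEdges G' : ℝ) = numEdges G := by rw [h.numEdges_eq a, h'.numEdges_eq a]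
  rw [h.Tmix_eq hm.ne' a b hab ha hb hpa hpb, h'.Tmix_eq (by rw [hmm]; exact hm.ne') a b hab ha hb
    (by rw [Function.update_of_ne hax, hpa]) (by rw [Function.update_of_ne hbx, hpb]), hmm,
    h.isTreeMetric.gutman_eq, h'.isTreeMetric.gutman_eq, hmm]
  suffices hs : ∑ z, ∑ w, (catDist pos o w z : ℝ)
      < ∑ z, ∑ w, (catDist (Function.update pos x k) o w z : ℝ) by
    gcongr
  -- Only the distances from `x` change.
  set f : ℕ → ℤ := fun p => ((k : ℤ) - p) - |(pos x : ℤ) - p| with hf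
  have hdiff : ∀ w z, (catDist (Function.update pos x k) o w z : ℤ) - catDist pos o w z
      = (if z = x then (if w ≠ x then f (pos w) else 0) else 0)
        + (if w = x then (if z ≠ x then f (pos z) else 0) else 0) := by
    intro w z
    have hw := h.pos_le w
    have hz := h.pos_le z
    by_cases hwx : w = x <;> by_cases hzx : z = x
    · simp [hwx, hzx, catDist]
    · have hzx' : ¬ x = z := fun h => hzx h.symm
      subst hwx
      simp only [catDist, hzx, hzx', if_false, if_true, Function.update_self, ne_eq,
        not_false_eq_true, Function.update_of_ne, hf]
      rcases abs_cases ((pos w : ℤ) - pos z) with h5 | h5 <;> omega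
    · subst hzx
      simp only [catDist, hwx, if_false, if_true, Function.update_self, ne_eq,
        not_false_eq_true, Function.update_of_ne, hf]
      rcases abs_cases ((pos z : ℤ) - pos w) with h5 | h5 <;> omega
    · simp [hwx, hzx, catDist, Function.update_of_ne]
  have hpos : 0 < ∑ w, if w ≠ x then f (pos w) else 0 := by
    have hsplit : ∀ w, (if w ≠ x then f (pos w) else 0) = (if o w = 0 then f (pos w) else 0)
        + (((k : ℤ) - pos x) * (if o w = 1 ∧ w ≠ x ∧ pos w = 1 then 1 else 0)
          - ((k : ℤ) - pos x) * (if o w = 1 ∧ w ≠ x ∧ pos w = k then 1 else 0)) := by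
      intro w
      have how := h.o_le w
      by_cases hwx : w = x
      · subst hwx
        simp [hx]
      · by_cases h0 : o w = 0
        · simp [hwx, h0]
        · have h1 : o w = 1 := by omega
          rcases hends w h1 hwx with hp | hp
          · have : (1 : ℕ) ≠ k := by omega
            have h6 : |(pos x : ℤ) - 1| = pos x - 1 := abs_of_nonneg (by omega)
            simp [hwx, h1, hp, this, hf, h6]
          · have : k ≠ (1 : ℕ) := by omega
            have h6 : |(pos x : ℤ) - k| = k - pos x := by rw [abs_of_nonpos (by omega)]; ring
            simp [hwx, h1, hp, this, hf, h6]
    have hcore : ∑ w, (if o w = 0 then f (pos w) else 0) = ∑ p ∈ Finset.Icc 1 k, f p := by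
      rw [← Finset.sum_filter]
      refine Finset.sum_bij (fun w _ => pos w) ?_ ?_ ?_ ?_
      · intro w _
        exact Finset.mem_Icc.2 ⟨h.one_le w, h.pos_le w⟩
      · intro u hu w hw huw
        exact h.core_inj u w (by simpa using hu) (by simpa using hw) huw
      · intro p hp
        rw [Finset.mem_Icc] at hp
        obtain ⟨u, h1, h2⟩ := h.core_ex p hp.1 hp.2
        exact ⟨u, by simpa using h1, h2⟩
      · intro _ _
        rfl
    simp only [hsplit]
    rw [Finset.sum_add_distrib, Finset.sum_sub_distrib, hcore, ← Finset.mul_sum,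
      ← Finset.mul_sum, Finset.sum_boole, Finset.sum_boole, ← mul_sub]
    have h7 := sum_displacement_pos (pos x) k hx2 hxk
    have h8 : (0 : ℤ) ≤ k - pos x := by omega
    have h9 := mul_nonneg h8 (sub_nonneg.2 (Int.ofNat_le.2 hcard))
    have h10 : (0 : ℤ) < ∑ p ∈ Finset.Icc 1 k, f p := h7
    exact add_pos_of_pos_of_nonneg h10 h9
  have htot : (∑ z, ∑ w, (catDist (Function.update pos x k) o w z : ℤ))
      - ∑ z, ∑ w, (catDist pos o w z : ℤ) = 2 * ∑ w, if w ≠ x then f (pos w) else 0 := by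
    rw [← Finset.sum_sub_distrib]
    simp only [← Finset.sum_sub_distrib, hdiff, Finset.sum_add_distrib, Finset.sum_ite_irrel,
      Finset.sum_const_zero, Finset.sum_ite_eq', Finset.mem_univ, if_true]
    ring
  have hlt : ∑ z, ∑ w, (catDist pos o w z : ℤ)
      < ∑ z, ∑ w, (catDist (Function.update pos x k) o w z : ℤ) := by linarith
  exact_mod_cast hlt

/-- Transplanting the leaf `x` to the last vertex `b` of the path only changes its position. -/
theorem IsCat.moveLeaf {V : Type*} [DecidableEq V] {G : SimpleGraph V} {k : ℕ} {pos o : V → ℕ}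
    (h : IsCat G k pos o) (x a b : V) (hx : o x = 1) (ha : o a = 0) (hax : pos a = pos x)
    (hb : o b = 0) (hbk : pos b = k) :
    IsCat (moveLeaf G a x b) k (Function.update pos x k) o where
  o_le := h.o_le
  one_le w := by
    have h1 := h.one_le w
    have h2 := h.pos_le w
    rw [Function.update_apply]
    split_ifs <;> omega
  pos_le w := by
    have h2 := h.pos_le w
    rw [Function.update_apply]
    split_ifs <;> omega
  core_inj u w hu hw := by
    have hux : u ≠ x := by rintro rfl; omega
    have hwx : w ≠ x := by rintro rfl; omega
    rw [Function.update_of_ne hux, Function.update_of_ne hwx]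
    exact h.core_inj u w hu hw
  core_ex p hp hpk := by
    obtain ⟨u, h1, h2⟩ := h.core_ex p hp hpk
    have hux : u ≠ x := by rintro rfl; omega
    exact ⟨u, h1, by rw [Function.update_of_ne hux, h2]⟩
  adj u w := by
    have hbx : b ≠ x := by rintro rfl; omega
    have h1 : (RWMix.moveLeaf G a x b).Adj u w ↔
        ((G.Adj u w ∧ s(u, w) ≠ s(a, x)) ∨ s(u, w) = s(b, x)) ∧ u ≠ w := by
      simp [RWMix.moveLeaf]
      tauto
    have h2 : ∀ y, G.Adj x y → y = a := by
      intro y hy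
      have := (h.adj x y).1 hy
      exact h.core_inj y a (by omega) ha (by omega)
    have h3 : ∀ y, o y = 0 → pos y = k → y = b := fun y h4 h5 =>
      h.core_inj y b h4 hb (by omega)
    rw [h1]
    by_cases hux : u = x <;> by_cases hwx : w = x
    · subst hux hwx
      simp [hx]
    · subst hux
      rw [Function.update_self, Function.update_of_ne hwx, hx]
      constructor
      · rintro ⟨⟨h4, h5⟩ | h4, -⟩
        · exact absurd (by rw [h2 w h4, Sym2.eq_swap]) h5
        · have : w = b := by
            rw [Sym2.eq_swap, Sym2.congr_left] at h4
            exact h4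
          subst this
          omega
      · intro h4
        have := h3 w (by omega) (by omega)
        subst this
        exact ⟨Or.inr Sym2.eq_swap, hbx.symm⟩
    · subst hwx
      rw [Function.update_self, Function.update_of_ne hux, hx]
      constructor
      · rintro ⟨⟨h4, h5⟩ | h4, -⟩
        · exact absurd (by rw [h2 u h4.symm]) h5
        · have : u = b := by
            rw [Sym2.congr_left] at h4
            exact h4
          subst this
          omega
      · intro h4
        have := h3 u (by omega) (by omega)
        subst this
        exact ⟨Or.inr rfl, hbx⟩
    · rw [Function.update_of_ne hux, Function.update_of_ne hwx, ← h.adj]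
      constructor
      · rintro ⟨⟨h4, -⟩ | h4, -⟩
        · exact h4
        · rw [Sym2.eq_iff] at h4
          tauto
      · intro h4
        refine ⟨Or.inl ⟨h4, ?_⟩, h4.ne⟩
        rw [Ne, Sym2.eq_iff]
        tauto

/-! ### Coordinates for a near double broom -/

/-- A vertex carrying a leaf has at most one neighbor of degree at least two. In a caterpillar
this characterizes double brooms. -/
def LeafRule {W : Type*} (H : SimpleGraph W) : Prop :=
  ∀ w u a b, (∀ y, H.Adj w y → y = u) → H.Adj w u → H.Adj u a → H.Adj u b →
    (∃ y z, y ≠ z ∧ H.Adj a y ∧ H.Adj a z) → (∃ y z, y ≠ z ∧ H.Adj b y ∧ H.Adj b z) → a = b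

theorem leafRule_doubleBroom (d ℓ r : ℕ) : LeafRule (doubleBroom d ℓ r) := by
  -- Only spine vertices, excluding the two ends once `d ≥ 2`, have two neighbors.
  have deep : ∀ a, (∃ y z, y ≠ z ∧ (doubleBroom d ℓ r).Adj a y ∧ (doubleBroom d ℓ r).Adj a z) →
      ∃ j : Fin (d + 1), a = Sum.inl j ∧ (2 ≤ d → 1 ≤ (j : ℕ) ∧ (j : ℕ) ≤ d - 1) := by
    rintro a ⟨y, z, hyz, hy, hz⟩
    rcases a with j | j | j <;> rcases y with y | y | y <;> rcases z with z | z | z <;>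
      simp only [doubleBroom, SimpleGraph.fromRel_adj, broomRel, ne_eq, Sum.inl.injEq,
        Sum.inr.injEq, reduceCtorEq, not_false_eq_true, true_and, false_or, or_false, and_false,
        Fin.ext_iff] at hyz hy hz <;>
      first
      | exact ⟨j, rfl, by omega⟩
      | (exfalso; omega)
  intro w u a b hw hwu hua hub ha hb
  obtain ⟨j, rfl, hj⟩ := deep a ha
  obtain ⟨j', rfl, hj'⟩ := deep b hb
  have hu : ∃ t : Fin (d + 1), u = Sum.inl t ∧ (2 ≤ d → (t : ℕ) = 1 ∨ (t : ℕ) = d - 1) := by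
    rcases w with s | s | s
    · rcases u with t | t | t
      · refine ⟨t, rfl, fun hd => ?_⟩
        simp only [doubleBroom, SimpleGraph.fromRel_adj, broomRel] at hwu
        by_cases hs : 1 ≤ (s : ℕ) ∧ (s : ℕ) ≤ d - 1
        · -- An inner spine vertex has two neighbors, so it is not a leaf.
          exfalso
          have h1 := hw (Sum.inl ⟨s + 1, by omega⟩)
            (by simp [doubleBroom, broomRel, Fin.ext_iff])
          have h2 := hw (Sum.inl ⟨s - 1, by omega⟩)
            (by simp [doubleBroom, broomRel, Fin.ext_iff]; omega)
          simp only [Sum.inl.injEq, Fin.ext_iff] at h1 h2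
          omega
        · omega
      -- If `w` carries a leaf off the spine, then `w = a`, which has two neighbors.
      all_goals
        exfalso
        simp only [doubleBroom, SimpleGraph.fromRel_adj, broomRel, false_or, or_false] at hwu hua
        obtain ⟨y, z, hyz, hy, hz⟩ := ha
        have hjs : j = s := Fin.ext (hua.2.trans hwu.2.symm)
        subst hjs
        exact hyz ((hw y hy).trans (hw z hz).symm)
    all_goals
      rcases u with t | t | t <;>
        simp only [doubleBroom, SimpleGraph.fromRel_adj, broomRel, ne_eq,
          reduceCtorEq, not_false_eq_true, true_and, or_false, and_false] at hwu
      exact ⟨t, rfl, by omega⟩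
  obtain ⟨t, rfl, ht⟩ := hu
  simp only [doubleBroom, SimpleGraph.fromRel_adj, broomRel, ne_eq, Sum.inl.injEq,
    Fin.ext_iff] at hua hub
  rw [Sum.inl.injEq, Fin.ext_iff]
  omega

theorem IsDoubleBroom.leafRule {W : Type*} {H : SimpleGraph W} (h : IsDoubleBroom H) :
    LeafRule H := by
  obtain ⟨d, ℓ, r, -, -, ⟨e⟩⟩ := h
  intro w u a b hw hwu hua hub ha hb
  apply e.injective
  have htwo : ∀ a, (∃ y z, y ≠ z ∧ H.Adj a y ∧ H.Adj a z) →
      ∃ y z, y ≠ z ∧ (doubleBroom d ℓ r).Adj (e a) y ∧ (doubleBroom d ℓ r).Adj (e a) z := by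
    rintro a ⟨y, z, hyz, hy, hz⟩
    exact ⟨e y, e z, e.injective.ne hyz, e.map_adj_iff.2 hy, e.map_adj_iff.2 hz⟩
  refine leafRule_doubleBroom d ℓ r (e w) (e u) (e a) (e b) ?_ (e.map_adj_iff.2 hwu)
    (e.map_adj_iff.2 hua) (e.map_adj_iff.2 hub) (htwo a ha) (htwo b hb)
  intro y hy
  obtain ⟨y, rfl⟩ := e.surjective y
  rw [hw y (e.map_adj_iff.1 hy)]

/-- In a tree all of whose vertices are on, or adjacent to, the path `c 0, …, c d`, the edges are
exactly those of the path and one for each vertex off the path: there are `|V| - 1` of these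
already. -/
theorem exists_parent {V : Type*} [Fintype V] {G : SimpleGraph V} (htree : G.IsTree) (d : ℕ)
    (c : ℕ → V) (hinj : ∀ i j, i ≤ d → j ≤ d → c i = c j → i = j)
    (hadj : ∀ j, j < d → G.Adj (c j) (c (j + 1)))
    (hcat : ∀ w, (∀ j, j ≤ d → w ≠ c j) → ∃ j, j ≤ d ∧ G.Adj w (c j)) :
    ∃ par : V → V, (∀ w, w ≠ c 0 → G.Adj w (par w) ∧
      ((∃ j, j < d ∧ w = c (j + 1) ∧ par w = c j) ∨
        ((∀ j, j ≤ d → w ≠ c j) ∧ ∃ j, j ≤ d ∧ par w = c j))) ∧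
      ∀ u w, G.Adj u w → (u ≠ c 0 ∧ w = par u) ∨ (w ≠ c 0 ∧ u = par w) := by
  have hex : ∀ w, ∃ p, w ≠ c 0 → G.Adj w p ∧
      ((∃ j, j < d ∧ w = c (j + 1) ∧ p = c j) ∨
        ((∀ j, j ≤ d → w ≠ c j) ∧ ∃ j, j ≤ d ∧ p = c j)) := by
    intro w
    by_cases hw : ∀ j, j ≤ d → w ≠ c j
    · obtain ⟨j, hj, ha⟩ := hcat w hw
      exact ⟨c j, fun _ => ⟨ha, Or.inr ⟨hw, j, hj, rfl⟩⟩⟩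
    · push Not at hw
      obtain ⟨j, hj, rfl⟩ := hw
      rcases j with _ | j
      · exact ⟨c 0, fun h => absurd rfl h⟩
      · exact ⟨c j, fun _ => ⟨(hadj j (by omega)).symm, Or.inl ⟨j, by omega, rfl, rfl⟩⟩⟩
  choose par hpar using hex
  refine ⟨par, hpar, ?_⟩
  have hmaps : Set.MapsTo (fun w => s(w, par w)) ((Finset.univ.erase (c 0) : Finset V) : Set V)
      (G.edgeFinset : Set (Sym2 V)) := by
    intro w hw
    have := (hpar w (by simpa using hw)).1
    simpa using this
  have hinjOn : Set.InjOn (fun w => s(w, par w))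
      ((Finset.univ.erase (c 0) : Finset V) : Set V) := by
    intro w hw w' hw' heq
    simp only [Sym2.eq_iff] at heq
    rcases heq with h | ⟨h1, h2⟩
    · exact h.1
    · exfalso
      obtain ⟨-, h3⟩ := hpar w (by simpa using hw)
      obtain ⟨-, h4⟩ := hpar w' (by simpa using hw')
      rcases h3 with ⟨j, hj, h5, h6⟩ | ⟨h5, j, hj, h6⟩ <;>
        rcases h4 with ⟨j', hj', h7, h8⟩ | ⟨h7, j', hj', h8⟩
      · have h9 := hinj _ _ (by omega) (by omega) (h5.symm.trans (h1.trans h8))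
        have h10 := hinj _ _ (by omega) (by omega) (h6.symm.trans (h2.trans h7))
        omega
      · exact h7 j (by omega) (h2.symm.trans h6)
      · exact h5 j' (by omega) (h1.trans h8)
      · exact h5 j' (by omega) (h1.trans h8)
  have hcard : G.edgeFinset.card ≤ (Finset.univ.erase (c 0) : Finset V).card := by
    have := htree.card_edgeFinset
    rw [Finset.card_erase_of_mem (Finset.mem_univ _), Finset.card_univ]
    omega
  have hsurj := Finset.surjOn_of_injOn_of_card_le _ hmaps hinjOn hcard
  intro u w huw
  obtain ⟨y, hy, hyuw⟩ := hsurj (show s(u, w) ∈ (G.edgeFinset : Set (Sym2 V)) by simpa using huw)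
  have hy : y ≠ c 0 := by simpa using hy
  simp only [Sym2.eq_iff] at hyuw
  rcases hyuw with ⟨rfl, rfl⟩ | ⟨rfl, rfl⟩
  · exact Or.inl ⟨hy, rfl⟩
  · exact Or.inr ⟨hy, rfl⟩

/-- The tree has coordinates in which the ends `c 0` and `c d` of the spine are leaves, so that its
path of non-leaves is `c 1, …, c (d - 1)`. -/
theorem exists_isCat {V : Type*} [Fintype V] {G : SimpleGraph V} (htree : G.IsTree) (d : ℕ)
    (hd : 3 ≤ d) (c : ℕ → V) (hinj : ∀ i j, i ≤ d → j ≤ d → c i = c j → i = j)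
    (hadj : ∀ j, j < d → G.Adj (c j) (c (j + 1)))
    (hcat : ∀ w, (∀ j, j ≤ d → w ≠ c j) → ∃ j, j ≤ d ∧ G.Adj w (c j))
    (h0 : ∀ y, G.Adj (c 0) y → y = c 1) (hdd : ∀ y, G.Adj (c d) y → y = c (d - 1)) :
    ∃ pos o : V → ℕ, IsCat G (d - 1) pos o ∧
      (∀ j, 1 ≤ j → j ≤ d - 1 → o (c j) = 0 ∧ pos (c j) = j) ∧
      (∀ w y, o w = 1 → (G.Adj w y ↔ y = c (pos w))) ∧
      (∀ w, (∀ j, 1 ≤ j → j ≤ d - 1 → w ≠ c j) → o w = 1) := by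
  obtain ⟨par, hpar, hedge⟩ := exists_parent htree d c hinj hadj hcat
  have hex : ∀ w, ∃ p q, 1 ≤ p ∧ p ≤ d - 1 ∧ ((q = 0 ∧ w = c p) ∨
      (q = 1 ∧ (∀ j, 1 ≤ j → j ≤ d - 1 → w ≠ c j) ∧ ∀ y, G.Adj w y ↔ y = c p)) := by
    intro w
    by_cases hw : ∀ j, j ≤ d → w ≠ c j
    · obtain ⟨h1, h2⟩ := hpar w (hw 0 (by omega))
      have h3 : ∃ j, j ≤ d ∧ par w = c j := by
        rcases h2 with ⟨j, hj, h4, -⟩ | h2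
        · exact absurd h4 (hw _ (by omega))
        · exact h2.2
      obtain ⟨j, hj, h3⟩ := h3
      rw [h3] at h1
      have hj0 : j ≠ 0 := by
        rintro rfl
        exact hw 1 (by omega) (h0 w h1.symm)
      have hjd : j ≠ d := by
        rintro rfl
        exact hw _ (by omega) (hdd w h1.symm)
      refine ⟨j, 1, by omega, by omega, Or.inr ⟨rfl, fun j _ _ => hw j (by omega), fun y =>
        ⟨fun hy => ?_, ?_⟩⟩⟩
      · rcases hedge w y hy with ⟨-, h4⟩ | ⟨h5, h4⟩
        · rw [h4, h3]
        · exfalso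
          rcases (hpar y h5).2 with ⟨j', hj', -, h6⟩ | ⟨-, j', hj', h6⟩
          · exact hw j' (by omega) (h4.trans h6)
          · exact hw j' (by omega) (h4.trans h6)
      · rintro rfl
        exact h1
    · push Not at hw
      obtain ⟨j, hj, rfl⟩ := hw
      by_cases hj0 : j = 0
      · subst hj0
        refine ⟨1, 1, by omega, by omega, Or.inr ⟨rfl, fun j h1 h2 h3 => ?_, fun y =>
          ⟨h0 y, ?_⟩⟩⟩
        · have := hinj _ _ (by omega) (by omega) h3
          omega
        · rintro rfl
          exact hadj 0 (by omega)
      · by_cases hjd : j = d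
        · subst hjd
          refine ⟨j - 1, 1, by omega, by omega, Or.inr ⟨rfl, fun j' h1 h2 h3 => ?_, fun y =>
            ⟨hdd y, ?_⟩⟩⟩
          · have := hinj _ _ (by omega) (by omega) h3
            omega
          · rintro rfl
            have := hadj (j - 1) (by omega)
            rw [Nat.sub_add_cancel (by omega)] at this
            exact this.symm
        · exact ⟨j, 0, by omega, by omega, Or.inl ⟨rfl, rfl⟩⟩
  choose pos o h1 h2 h3 using hex
  have hcore : ∀ w, o w = 0 → w = c (pos w) := by
    intro w hw
    rcases h3 w with h | h
    · exact h.2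
    · omega
  have hcorec : ∀ j, 1 ≤ j → j ≤ d - 1 → o (c j) = 0 ∧ pos (c j) = j := by
    intro j hj hjd
    rcases h3 (c j) with h | h
    · exact ⟨h.1, (hinj _ _ (by omega) (by have := h2 (c j); omega) h.2).symm⟩
    · exact absurd rfl (h.2.1 j hj hjd)
  have hleaf : ∀ w y, o w = 1 → (G.Adj w y ↔ y = c (pos w)) := by
    intro w y hw
    rcases h3 w with h | h
    · omega
    · exact h.2.2 y
  have hole : ∀ w, o w ≤ 1 := by
    intro w
    rcases h3 w with h | h <;> omega
  have hpath : ∀ i j, i ≤ d → j ≤ d → G.Adj (c i) (c j) → i + 1 = j ∨ j + 1 = i := by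
    intro i j hi hj hij
    have key : ∀ i j, i ≤ d → j ≤ d → c i ≠ c 0 → c j = par (c i) → j + 1 = i := by
      intro i j hi hj hi0 hpi
      rcases (hpar _ hi0).2 with ⟨t, ht, h4, h5⟩ | ⟨h4, -⟩
      · have h6 := hinj _ _ hi (by omega) h4
        have h7 := hinj _ _ hj (by omega) (hpi.trans h5)
        omega
      · exact absurd rfl (h4 i hi)
    rcases hedge _ _ hij with ⟨h4, h5⟩ | ⟨h4, h5⟩
    · exact Or.inr (key i j hi hj h4 h5)
    · exact Or.inl (key j i hj hi h4 h5)
  have hmix : ∀ u w, o u = 1 → o w = 0 → (G.Adj u w ↔ pos u = pos w) := by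
    intro u w hu hw
    rw [hleaf u w hu]
    constructor
    · intro h
      have := (hcorec (pos u) (h1 u) (h2 u)).2
      rw [h, this]
    · intro h
      rw [h]
      exact hcore w hw
  refine ⟨pos, o, ⟨hole, h1, h2, ?_, ?_, ?_⟩, hcorec, hleaf, ?_⟩
  · intro u w hu hw huw
    rw [hcore u hu, hcore w hw, huw]
  · intro p hp hpd
    exact ⟨c p, hcorec p hp hpd⟩
  · intro u w
    have hu := hole u
    have hw := hole w
    by_cases hu0 : o u = 0 <;> by_cases hw0 : o w = 0
    · constructor
      · intro h
        rw [hcore u hu0, hcore w hw0] at h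
        have := hpath _ _ (by have := h2 u; omega) (by have := h2 w; omega) h
        omega
      · intro h
        rw [hcore u hu0, hcore w hw0]
        have hu2 := h2 u
        have hw2 := h2 w
        rcases h with h | ⟨-, -, h | h⟩
        · omega
        · rw [← h]
          exact hadj _ (by omega)
        · rw [← h]
          exact (hadj _ (by omega)).symm
    · rw [G.adj_comm, hmix w u (by omega) hu0]
      omega
    · rw [hmix u w (by omega) hw0]
      omega
    · rw [hleaf u w (by omega)]
      constructor
      · intro h
        have := (hcorec (pos u) (h1 u) (h2 u)).1
        rw [← h] at this
        omega
      · omega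
  · intro w hw
    rcases h3 w with h | h
    · exact absurd h.2 (hw _ (h1 w) (h2 w))
    · exact h.1

/-- At an end of the path of non-leaves, all neighbors but one are leaves. -/
theorem IsCat.deg_end {V : Type*} [Fintype V] [DecidableEq V] {G : SimpleGraph V} {k : ℕ}
    {pos o : V → ℕ}
    (h : IsCat G k pos o) (x u : V) (hu : o u = 0) (hux : pos u ≠ pos x) (hk : 2 ≤ k)
    (hend : pos u = 1 ∨ pos u = k) :
    deg G u = (Finset.univ.filter fun w => o w = 1 ∧ w ≠ x ∧ pos w = pos u).card + 1 := by
  obtain ⟨y, hy, hyp⟩ := h.core_ex (if pos u = 1 then 2 else k - 1)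
    (by split_ifs <;> omega) (by split_ifs <;> omega)
  rw [deg_eq_card, ← Finset.card_insert_of_notMem (a := y) (by simp [hy])]
  congr 1
  ext w
  simp only [Finset.mem_filter, Finset.mem_univ, true_and, Finset.mem_insert, h.adj]
  have hw1 := h.one_le w
  have hwk := h.pos_le w
  constructor
  · intro h1
    by_cases how : o w = 0
    · left
      apply h.core_inj w y how hy
      split_ifs at hyp <;> omega
    · right
      refine ⟨by omega, ?_, by omega⟩
      rintro rfl
      omega
  · rintro (rfl | h1)
    · right
      split_ifs at hyp <;> omega
    · omega

theorem IsLeaf.eq_of_adj {V : Type*} {G : SimpleGraph V} {w u y : V} (h : IsLeaf G w)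
    (hu : G.Adj w u) (hy : G.Adj w y) : y = u := by
  have := (Nat.card_eq_one_iff_unique.1 h).1
  exact congrArg Subtype.val (Subsingleton.elim (⟨y, hy⟩ : {w' // G.Adj w w'}) ⟨u, hu⟩)

/-- moving the one extra leaf `x` of a near double broom from `v_i`
(`2 ≤ i ≤ d-2`) to `v_{d-1}`, where `deg(v_1) ≥ deg(v_{d-1})`, strictly increases the
mixing time. -/
theorem stmt19 (n d : ℕ) {V : Type*} [Fintype V] [DecidableEq V]
    (G : SimpleGraph V) (htree : G.IsTree) (hcard : Fintype.card V = n)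
    (hdiam : G.diam = d)
    (v : Fin (d+1) → V) (hspine : IsLeafPath G d v)
    (hcat : ∀ w, ∃ m, G.dist w (v m) ≤ 1)
    (hnd : IsNearDoubleBroom G)
    (i : ℕ) (hi1 : 2 ≤ i) (hi2 : i ≤ d - 2)
    (hdeg : deg G (v ⟨d - 1, by omega⟩) ≤ deg G (v ⟨1, by omega⟩))
    (x : V) (hxP : ∀ m, x ≠ v m) (hxleaf : IsLeaf G x)
    (hxadj : G.Adj (v ⟨i, by omega⟩) x)
    (hrem : IsDoubleBroom (G.induce {w | w ≠ x}))
    (G' : SimpleGraph V)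
    (hG' : G' = moveLeaf G (v ⟨i, by omega⟩) x (v ⟨d - 1, by omega⟩)) :
    Tmix G' > Tmix G := by
  have hd : 4 ≤ d := by omega
  obtain ⟨hvinj, hvadj, hv0, hvd⟩ := hspine
  set c : ℕ → V := fun j => v ⟨min j d, by omega⟩ with hc
  have hcv : ∀ j (h : j < d + 1), v ⟨j, h⟩ = c j := by
    intro j h
    simp only [hc]
    congr 2
    omega
  have hinj : ∀ i j, i ≤ d → j ≤ d → c i = c j → i = j := by
    intro i j hi hj hij
    have := hvinj hij
    simp only [Fin.mk.injEq] at this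
    omega
  have hadj : ∀ j, j < d → G.Adj (c j) (c (j + 1)) := by
    intro j hj
    rw [← hcv j (by omega), ← hcv (j + 1) (by omega)]
    exact hvadj j hj
  have hcat' : ∀ w, (∀ j, j ≤ d → w ≠ c j) → ∃ j, j ≤ d ∧ G.Adj w (c j) := by
    intro w hw
    obtain ⟨m, hm⟩ := hcat w
    have hmv : v m = c m := hcv m m.2
    refine ⟨m, by omega, ?_⟩
    rw [hmv] at hm
    rw [← SimpleGraph.dist_eq_one_iff_adj]
    have := htree.connected.pos_dist_of_ne (hw m (by omega))
    omega
  have h0 : ∀ y, G.Adj (c 0) y → y = c 1 := by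
    intro y hy
    have h1 : IsLeaf G (c 0) := by
      rw [← hcv 0 (by omega)]
      exact hv0
    exact h1.eq_of_adj (hadj 0 (by omega)) hy
  have hdd : ∀ y, G.Adj (c d) y → y = c (d - 1) := by
    intro y hy
    have h1 : IsLeaf G (c d) := by
      rw [← hcv d (by omega)]
      exact hvd
    have h2 := hadj (d - 1) (by omega)
    rw [Nat.sub_add_cancel (by omega)] at h2
    exact h1.eq_of_adj h2.symm hy
  obtain ⟨pos, o, hC, hcore, hleaf, hone⟩ :=
    exists_isCat htree d (by omega) c hinj hadj hcat' h0 hdd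
  rw [hcv] at hxadj
  rw [hcv, hcv] at hdeg
  rw [hcv, hcv] at hG'
  have hxc : ∀ j, j ≤ d → c j ≠ x := fun j hj h => hxP ⟨j, by omega⟩ (by rw [hcv]; exact h.symm)
  have hxo : o x = 1 := hone x fun j h1 h2 h3 => hxc j (by omega) h3.symm
  obtain ⟨hio, hip⟩ := hcore i (by omega) (by omega)
  obtain ⟨h1o, h1p⟩ := hcore 1 (by omega) (by omega)
  obtain ⟨hko, hkp⟩ := hcore (d - 1) (by omega) (by omega)
  have hxp : pos x = i := by
    have := (hC.adj _ _).1 hxadj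
    omega
  have hao : o (c 0) = 1 := hone _ fun j h1 h2 h3 => by
    have := hinj _ _ (by omega) (by omega) h3
    omega
  have hbo : o (c d) = 1 := hone _ fun j h1 h2 h3 => by
    have := hinj _ _ (by omega) (by omega) h3
    omega
  have hap : pos (c 0) = 1 := by
    have := (hC.adj _ _).1 (hadj 0 (by omega))
    rw [zero_add] at this
    omega
  have hbp : pos (c d) = d - 1 := by
    have h2 := hadj (d - 1) (by omega)
    rw [Nat.sub_add_cancel (by omega)] at h2
    have := (hC.adj _ _).1 h2
    omega
  have hC' : IsCat G' (d - 1) (Function.update pos x (d - 1)) o := by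
    rw [hG']
    exact hC.moveLeaf x (c i) (c (d - 1)) hxo hio (by omega) hko hkp
  refine hC.Tmix_lt x hxo (by omega) (by omega) hC' ?_ ?_ (c 0) (c d) hao hbo hap hbp
  · -- A leaf at an inner vertex `c p` would have `c (p - 1)` and `c (p + 1)` as deep siblings.
    intro w how hwx
    by_contra hcon
    have hp1 := hC.one_le w
    have hp2 := hC.pos_le w
    set p := pos w with hp
    let H := G.induce {w | w ≠ x}
    let e : ∀ j, j ≤ d → {w | w ≠ x} := fun j hj => ⟨c j, hxc j hj⟩
    have hne : ∀ i j (hi : i ≤ d) (hj : j ≤ d), i ≠ j → e i hi ≠ e j hj := by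
      intro i j hi hj hij h
      exact hij (hinj i j hi hj (congrArg Subtype.val h))
    have hstep : ∀ i j (hi : i ≤ d) (hj : j ≤ d), i + 1 = j → H.Adj (e i hi) (e j hj) := by
      rintro i j hi hj rfl
      exact hadj i (by omega)
    have := hrem.leafRule (⟨w, hwx⟩ : {w | w ≠ x}) (e p (by omega)) (e (p - 1) (by omega))
      (e (p + 1) (by omega))
      (fun y hy => Subtype.ext ((hleaf w y how).1 hy))
      ((hleaf w _ how).2 rfl)
      (hstep _ _ (by omega) (by omega) (by omega)).symm (hstep _ _ (by omega) (by omega) (by omega))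
      ⟨e (p - 2) (by omega), e p (by omega), hne _ _ (by omega) (by omega) (by omega),
        (hstep _ _ (by omega) (by omega) (by omega)).symm, hstep _ _ (by omega) (by omega) (by omega)⟩
      ⟨e p (by omega), e (p + 2) (by omega), hne _ _ (by omega) (by omega) (by omega),
        (hstep _ _ (by omega) (by omega) (by omega)).symm, hstep _ _ (by omega) (by omega) (by omega)⟩
    exact hne _ _ (by omega) (by omega) (by omega) this
  · have e1 := hC.deg_end x (c 1) h1o (by omega) (by omega) (Or.inl h1p)
    have e2 := hC.deg_end x (c (d - 1)) hko (by omega) (by omega) (Or.inr hkp)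
    rw [h1p] at e1
    rw [hkp] at e2
    omega

end RWMix
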